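/- Define rational numbers b_{m,n} by b_{0,0} = 1, b_{m,n} = C(n−1, m−1)·Cat_m for 1 ≤ m ≤ n, and b_{m,n} = 0 otherwise, where Cat_m = C(2m, m)/(m+1) is the m-th Catalan number. Let H = Σ_{n≥0} (Σ_{m=0}^{n} b_{m,n}·s^m) tⁿ, regarded as a formal power series in t with coefficients in the polynomial ring ℚ[s]. Then (1 − t)·H = (1 − t) + s·t·H² in (ℚ[s])[[t]]. -/

import Mathlib

open PowerSeries in
lemma coeff_aux (m n : ℕ) :
    coeff n ((C (R := Polynomial ℚ) Polynomial.X * X * mk 1) ^ m) =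
      if m = 0 then (if n = 0 then 1 else 0) else
      if m ≤ n then Polynomial.C ((Nat.choose (n - 1) (m - 1) : ℚ)) * Polynomial.X ^ m else 0 := by
  rcases m with _ | d
  · simp [coeff_one]
  · have h : (C (R := Polynomial ℚ) Polynomial.X * X * mk 1) ^ (d+1)
        = C (Polynomial.X ^ (d+1)) * (X ^ (d+1) * (mk 1 : PowerSeries (Polynomial ℚ)) ^ (d+1)) := by
      rw [mul_pow, mul_pow, map_pow, mul_assoc]
    rw [h, coeff_C_mul, coeff_X_pow_mul', mk_one_pow_eq_mk_choose_add]
    simp only [Nat.add_eq_zero_iff, one_ne_zero, and_false, if_false]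
    split_ifs with hl
    · rw [coeff_mk, mul_comm]
      have : d + (n - (d+1)) = n - 1 := by omega
      simp [this]
    · simp

/-- Functional equation for the two-variable generating function of edge-rooted
weighted bicolored plane trees by weight and number of edges:
`(1 - t)·H = (1 - t) + s·t·H²` in `(ℚ[s])[[t]]`. -/
theorem stmt14 (b : ℕ → ℕ → ℚ) (hb00 : b 0 0 = 1)
    (hb : ∀ m n : ℕ, 1 ≤ m → m ≤ n →
      b m n = (Nat.choose (n - 1) (m - 1) : ℚ) * ((Nat.choose (2 * m) m : ℚ) / (m + 1)))
    (hb0 : ∀ m n : ℕ, ¬(m = 0 ∧ n = 0) → ¬(1 ≤ m ∧ m ≤ n) → b m n = 0) :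
    (1 - PowerSeries.X) *
        PowerSeries.mk (fun n =>
          ∑ m ∈ Finset.range (n + 1), Polynomial.C (b m n) * Polynomial.X ^ m)
      = (1 - PowerSeries.X) +
        PowerSeries.C (R := Polynomial ℚ) Polynomial.X * PowerSeries.X *
          (PowerSeries.mk (fun n =>
            ∑ m ∈ Finset.range (n + 1), Polynomial.C (b m n) * Polynomial.X ^ m)) ^ 2 := by
  classical
  set a : PowerSeries (Polynomial ℚ) :=
    PowerSeries.C (R := Polynomial ℚ) Polynomial.X * PowerSeries.X * PowerSeries.mk 1 with ha_def
  have ha : PowerSeries.HasSubst a := by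
    apply PowerSeries.HasSubst.of_constantCoeff_zero'
    simp [a]
  set F : PowerSeries (Polynomial ℚ) :=
    PowerSeries.map (Nat.castRingHom (Polynomial ℚ)) PowerSeries.catalanSeries with hF
  have hFe : F ^ 2 * PowerSeries.X + 1 = F := by
    have := congrArg (PowerSeries.map (Nat.castRingHom (Polynomial ℚ)))
      PowerSeries.catalanSeries_sq_mul_X_add_one
    simpa using this
  have hG : (PowerSeries.substAlgHom ha F) ^ 2 * a + 1 = PowerSeries.substAlgHom ha F := by
    have := congrArg (PowerSeries.substAlgHom ha) hFe
    rw [map_add, map_mul, map_pow, map_one, PowerSeries.substAlgHom_X] at this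
    exact this
  have ha1 : (1 - PowerSeries.X) * a =
      PowerSeries.C (R := Polynomial ℚ) Polynomial.X * PowerSeries.X := by
    have := PowerSeries.mk_one_mul_one_sub_eq_one (Polynomial ℚ)
    rw [ha_def]
    linear_combination (PowerSeries.C (R := Polynomial ℚ) Polynomial.X * PowerSeries.X) * this
  have hcat : ∀ m : ℕ, (Nat.choose (2 * m) m : ℚ) / (m + 1) = catalan m := by
    intro m
    have := succ_mul_catalan_eq_centralBinom m
    rw [Nat.centralBinom_eq_two_mul_choose] at this
    rw [← this]
    push_cast
    field_simp
  have hH : PowerSeries.mk (fun n =>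
      ∑ m ∈ Finset.range (n + 1), Polynomial.C (b m n) * Polynomial.X ^ m)
      = PowerSeries.substAlgHom ha F := by
    ext1 n
    rw [PowerSeries.coe_substAlgHom, PowerSeries.coeff_subst' ha, PowerSeries.coeff_mk]
    rw [finsum_eq_sum_of_support_subset (s := Finset.range (n + 1))]
    · refine Finset.sum_congr rfl fun m hm => ?_
      have hm' : m ≤ n := by simpa [Nat.lt_succ_iff] using hm
      rw [ha_def, coeff_aux]
      rcases Nat.eq_zero_or_pos m with rfl | hpos
      · rcases Nat.eq_zero_or_pos n with rfl | hn
        · simp [hb00, hF]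
        · rw [hb0 0 n (by omega) (by omega)]
          simp [hn.ne']
      · rw [if_neg hpos.ne', if_pos hm', hb m n hpos hm', hcat]
        simp [hF]
        ring
    · intro m hm
      by_contra hc
      apply hm
      have hc' : n < m := by simpa using hc
      show _ • PowerSeries.coeff n (a ^ m) = 0
      rw [ha_def, coeff_aux, if_neg (by omega), if_neg (by omega), smul_zero]
  rw [hH]
  linear_combination (-(1 - PowerSeries.X)) * hG + (PowerSeries.substAlgHom ha F) ^ 2 * ha1
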